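/- arXiv:1704.06688 — 5 statements merged into one kernel-verified Lean document; each statement's English description precedes it below -/
import Mathlib

section
/- Let H be a real inner product space with inner product ⟨·,·⟩, and let E be a subspace of H. Let a, ã ∈ H be orthogonal to E (i.e., ⟨a,w⟩ = 0 and ⟨ã,w⟩ = 0 for all w ∈ E), and let b, b̃, t ∈ E. Then ⟨t, b⟩ − ⟨t + (1/2)(ã − b̃), b − a⟩ = (1/2)⟨a + b, ã + b̃⟩. -/
open scoped RealInnerProductSpace

/-!
Changing the signs of both `bT` and `b` changes only the cross terms of the pairing of `aT + bT`
with `a + b`, and these vanish by orthogonality. Hence `aT - bT` pairs with `a - b` exactly as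
`aT + bT` pairs with `a + b`, while `t ⟂ a` makes `t` pair with `b - a` as it does with `b`.
-/

section Sesquilinear

variable {R R₁ R₂ M M₁ M₂ : Type*} [CommSemiring R] [Semiring R₁] [Semiring R₂]
  [AddCommGroup M] [Module R M] [AddCommGroup M₁] [Module R₁ M₁] [AddCommGroup M₂] [Module R₂ M₂]
  {I₁ : R₁ →+* R} {I₂ : R₂ →+* R}

theorem map_sub_sub_eq_map_add_add_of_eq_zero (B : M₁ →ₛₗ[I₁] M₂ →ₛₗ[I₂] M) {x y : M₁} {u v : M₂}
    (hxv : B x v = 0) (hyu : B y u = 0) :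
    B (x - y) (u - v) = B (x + y) (u + v) := by
  simp only [map_sub, map_add, LinearMap.sub_apply, LinearMap.add_apply, hxv, hyu]
  abel

theorem basic_identity_general (B : M₁ →ₛₗ[I₁] M₂ →ₛₗ[I₂] M) (c : R₁) {a b : M₂} {aT bT t : M₁}
    (hta : B t a = 0) (haTb : B aT b = 0) (hbTa : B bT a = 0) :
    B t b - B (t + c • (aT - bT)) (b - a) = I₁ c • B (aT + bT) (a + b) := by
  have ht : B t (b - a) = B t b := by rw [map_sub, hta, sub_zero]
  calc
    B t b - B (t + c • (aT - bT)) (b - a)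
        = B t b - (B t (b - a) + I₁ c • B (aT - bT) (b - a)) := by
      rw [B.map_add₂, B.map_smulₛₗ₂]
    _ = I₁ c • B (aT - bT) (a - b) := by
      rw [ht, sub_add_cancel_left, ← smul_neg, ← map_neg, neg_sub]
    _ = I₁ c • B (aT + bT) (a + b) := by
      rw [map_sub_sub_eq_map_add_add_of_eq_zero B haTb hbTa]

end Sesquilinear

/-- Abstract Hilbert-space form of the basic identity of goal-oriented error
estimation: if `a, aT` are orthogonal to the subspace `E` and `b, bT, t ∈ E`, then
`⟪t, b⟫ − ⟪t + (1/2)(aT − bT), b − a⟫ = (1/2)⟪a + b, aT + bT⟫`. -/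
theorem basic_identity {H : Type*} [NormedAddCommGroup H] [InnerProductSpace ℝ H]
    (E : Submodule ℝ H) (a aT b bT t : H)
    (ha : ∀ w ∈ E, ⟪a, w⟫ = 0) (haT : ∀ w ∈ E, ⟪aT, w⟫ = 0)
    (hb : b ∈ E) (hbT : bT ∈ E) (ht : t ∈ E) :
    ⟪t, b⟫ - ⟪t + (1/2 : ℝ) • (aT - bT), b - a⟫
      = (1/2 : ℝ) * ⟪a + b, aT + bT⟫ := by
  rw [real_inner_comm (aT + bT) (a + b)]
  exact basic_identity_general (innerₗ H) (1/2) (inner_eq_zero_symm.mp (ha t ht)) (haT b hb)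
    (inner_eq_zero_symm.mp (ha bT hbT))
end

section
/- Let H be a real inner product space with inner product ⟨·,·⟩ and induced norm ‖·‖, and let E be a subspace of H. Let a, ã ∈ H be orthogonal to E (i.e., ⟨a,w⟩ = 0 and ⟨ã,w⟩ = 0 for all w ∈ E), and let b, b̃, t ∈ E. Then |⟨t, b⟩ − ⟨t + (1/2)(ã − b̃), b − a⟩| ≤ (1/2) ‖b − a‖ · ‖ã + b̃‖. -/
open scoped RealInnerProductSpace

/- The left side of the bound equals `⟪aT + bT, b + a⟫ / 2` up to inner products that vanish by
orthogonality. Cauchy–Schwarz bounds this inner product, and `‖b + a‖ = ‖b - a‖` since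
`a` is orthogonal to `b`. -/

section Sesquilinear

open scoped InnerProductSpace

variable {𝕜 H : Type*} [RCLike 𝕜] [SeminormedAddCommGroup H] [InnerProductSpace 𝕜 H]

theorem inner_sub_inner_add_half_smul_sub (a aT b bT t : H) :
    ⟪t, b⟫_𝕜 - ⟪t + (1 / 2 : 𝕜) • (aT - bT), b - a⟫_𝕜
      = 1 / 2 * ⟪aT + bT, b + a⟫_𝕜 + ⟪t - bT, a⟫_𝕜 - ⟪aT, b⟫_𝕜 := by
  simp only [inner_add_left, inner_add_right, inner_sub_left, inner_sub_right, inner_smul_left,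
    map_div₀, map_one, map_ofNat]
  ring

theorem classical_bounding_general {a aT b bT t : H}
    (hab : ⟪a, b⟫_𝕜 = 0) (haTb : ⟪aT, b⟫_𝕜 = 0) (hta : ⟪t - bT, a⟫_𝕜 = 0) :
    ‖⟪t, b⟫_𝕜 - ⟪t + (1 / 2 : 𝕜) • (aT - bT), b - a⟫_𝕜‖
      ≤ 1 / 2 * (‖b - a‖ * ‖aT + bT‖) := by
  have identity : ⟪t, b⟫_𝕜 - ⟪t + (1 / 2 : 𝕜) • (aT - bT), b - a⟫_𝕜
      = 1 / 2 * ⟪aT + bT, b + a⟫_𝕜 := by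
    rw [inner_sub_inner_add_half_smul_sub, hta, haTb, add_zero, sub_zero]
  calc ‖⟪t, b⟫_𝕜 - ⟪t + (1 / 2 : 𝕜) • (aT - bT), b - a⟫_𝕜‖
      = 1 / 2 * ‖⟪aT + bT, b + a⟫_𝕜‖ := by
        rw [identity, norm_mul, norm_div, norm_one, RCLike.norm_two]
    _ ≤ 1 / 2 * (‖aT + bT‖ * ‖b + a‖) := by
        gcongr
        exact norm_inner_le_norm _ _
    _ = 1 / 2 * (‖b - a‖ * ‖aT + bT‖) := by
        rw [norm_sub_eq_norm_add hab, mul_comm ‖aT + bT‖]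

end Sesquilinear

/-- Abstract Hilbert-space form of the classical goal-oriented bounding
`|I_ex − I_h − I_hh| ≤ (1/2) e_cre ẽ_cre`. -/
theorem classical_bounding {H : Type*} [NormedAddCommGroup H] [InnerProductSpace ℝ H]
    (E : Submodule ℝ H) (a aT b bT t : H)
    (ha : ∀ w ∈ E, ⟪a, w⟫ = 0) (haT : ∀ w ∈ E, ⟪aT, w⟫ = 0)
    (hb : b ∈ E) (hbT : bT ∈ E) (ht : t ∈ E) :
    |⟪t, b⟫ - ⟪t + (1/2 : ℝ) • (aT - bT), b - a⟫|
      ≤ (1/2 : ℝ) * (‖b - a‖ * ‖aT + bT‖) :=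
  classical_bounding_general (ha b hb) (haT b hb)
    (inner_eq_zero_symm.mp (ha (t - bT) (E.sub_mem ht hbT)))
end

section
/- Let h > 0 and 0 < λ ≤ λ̄ be real numbers. Let F : [λ, λ̄] → ℝ be continuously differentiable and α : [λ, λ̄] → ℝ be continuous, and assume F(s) − h·s·F'(s) ≤ α(s) for all s ∈ [λ, λ̄]. Then F(λ) ≤ (λ/λ̄)^{1/h} F(λ̄) + ∫_λ^{λ̄} (s/λ)^{−1/h} · (α(s)/(h·s)) ds. -/
open intervalIntegral

/-!
The function `w s = (s / λ) ^ (-(1 / h))` is an integrating factor for `F s - h * s * F' s ≤ α s`: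
it solves `w' = -w / (h s)`, so `(-w F)' = w (F - h s F') / (h s) ≤ w α / (h s)`. Integrating over
`[λ, λ̄]` gives the claim, because `w λ = 1` and `w λ̄ = (λ / λ̄) ^ (1 / h)`.
-/

open MeasureTheory Set

theorem mul_le_mul_add_integral_of_integrating_factor {a b : ℝ} {w p f f' g : ℝ → ℝ} (hab : a ≤ b)
    (hw : ContinuousOn w (Icc a b))
    (hw' : ∀ s ∈ Ioo a b, HasDerivWithinAt w (-(p s * w s)) (Ioi s) s)
    (hw_nonneg : ∀ s ∈ Ioo a b, 0 ≤ w s)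
    (hf : ContinuousOn f (Icc a b))
    (hf' : ∀ s ∈ Ioo a b, HasDerivWithinAt f (f' s) (Ioi s) s)
    (hg : IntegrableOn g (Icc a b))
    (hfg : ∀ s ∈ Ioo a b, p s * f s - f' s ≤ g s) :
    w a * f a ≤ w b * f b + ∫ s in a..b, w s * g s := by
  have hderiv : ∀ s ∈ Ioo a b,
      HasDerivWithinAt (fun t ↦ -(w t * f t)) (w s * (p s * f s - f' s)) (Ioi s) s := fun s hs ↦
    ((hw' s hs).fun_mul (hf' s hs)).fun_neg.congr_deriv (by ring)
  have hsub : -(w b * f b) - -(w a * f a) ≤ ∫ s in a..b, w s * g s :=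
    sub_le_integral_of_hasDeriv_right_of_le hab (hw.mul hf).neg hderiv
      (hg.continuousOn_mul hw isCompact_Icc)
      fun s hs ↦ mul_le_mul_of_nonneg_left (hfg s hs) (hw_nonneg s hs)
  linarith

theorem hasDerivAt_div_const_rpow {c s : ℝ} (r : ℝ) (hc : c ≠ 0) (hs : s ≠ 0) :
    HasDerivAt (fun t : ℝ ↦ (t / c) ^ r) (r / s * (s / c) ^ r) s := by
  have hsc : s / c ≠ 0 := div_ne_zero hs hc
  refine (((hasDerivAt_id s).div_const c).rpow_const (Or.inl hsc)).congr_deriv ?_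
  rw [id, Real.rpow_sub_one hsc]
  field_simp

theorem first_improved_key_inequality_general {h lam lamBar : ℝ}
    (hh : 0 < h) (hlam : 0 < lam) (hle : lam ≤ lamBar)
    {F F' α : ℝ → ℝ} (hF : ContinuousOn F (Icc lam lamBar))
    (hF' : ∀ s ∈ Ioo lam lamBar, HasDerivWithinAt F (F' s) (Ioi s) s)
    (hα : IntegrableOn α (Icc lam lamBar))
    (hineq : ∀ s ∈ Ioo lam lamBar, F s - h * s * F' s ≤ α s) :
    F lam ≤ (lam / lamBar) ^ (1 / h) * F lamBar
      + ∫ s in lam..lamBar, (s / lam) ^ (-(1 / h)) * (α s / (h * s)) := by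
  have hpos : ∀ s ∈ Icc lam lamBar, 0 < s := fun s hs ↦ hlam.trans_le hs.1
  have hweight : ∀ s ∈ Icc lam lamBar, HasDerivAt (fun t : ℝ ↦ (t / lam) ^ (-(1 / h)))
      (-(1 / (h * s) * (s / lam) ^ (-(1 / h)))) s := fun s hs ↦
    (hasDerivAt_div_const_rpow _ hlam.ne' (hpos s hs).ne').congr_deriv (by ring)
  have hg : IntegrableOn (fun s ↦ α s / (h * s)) (Icc lam lamBar) := by
    simp only [div_eq_mul_inv]
    exact hα.mul_continuousOn
      (.inv₀ (by fun_prop) fun s hs ↦ (mul_pos hh (hpos s hs)).ne') isCompact_Icc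
  have hineq_div : ∀ s ∈ Ioo lam lamBar, 1 / (h * s) * F s - F' s ≤ α s / (h * s) := fun s hs ↦ by
    have hhs : 0 < h * s := mul_pos hh (hpos s (Ioo_subset_Icc_self hs))
    calc 1 / (h * s) * F s - F' s = (F s - h * s * F' s) / (h * s) := by
          rw [sub_div, mul_div_cancel_left₀ _ hhs.ne', one_div_mul_eq_div]
      _ ≤ α s / (h * s) := div_le_div_of_nonneg_right (hineq s hs) hhs.le
  have hint := mul_le_mul_add_integral_of_integrating_factor hle
    (fun s hs ↦ (hweight s hs).continuousAt.continuousWithinAt)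
    (fun s hs ↦ (hweight s (Ioo_subset_Icc_self hs)).hasDerivWithinAt)
    (fun s hs ↦ Real.rpow_nonneg (div_pos (hpos s (Ioo_subset_Icc_self hs)) hlam).le _)
    hF hF' hg hineq_div
  rwa [div_self hlam.ne', Real.one_rpow, one_mul, Real.rpow_neg_eq_inv_rpow, inv_div] at hint

/-- Real-analytic core of Proposition 1 (first improved bounding technique):
if `F(s) − h·s·F'(s) ≤ α(s)` on `[λ, λ̄]` with `F` continuously differentiable and
`α` continuous, then `F(λ) ≤ (λ/λ̄)^(1/h) F(λ̄) + ∫_λ^λ̄ (s/λ)^(−1/h) α(s)/(h s) ds`. -/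
theorem first_improved_key_inequality
    (h lam lamBar : ℝ) (hh : 0 < h) (hlam : 0 < lam) (hle : lam ≤ lamBar)
    (F F' α : ℝ → ℝ)
    (hF : ∀ s ∈ Set.Icc lam lamBar, HasDerivAt F (F' s) s)
    (hF' : ContinuousOn F' (Set.Icc lam lamBar))
    (hα : ContinuousOn α (Set.Icc lam lamBar))
    (hineq : ∀ s ∈ Set.Icc lam lamBar, F s - h * s * F' s ≤ α s) :
    F lam ≤ (lam / lamBar) ^ (1 / h) * F lamBar
      + ∫ s in lam..lamBar, (s / lam) ^ (-(1 / h)) * (α s / (h * s)) :=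
  first_improved_key_inequality_general hh hlam hle (HasDerivAt.continuousOn hF)
    (fun s hs ↦ (hF s (Ioo_subset_Icc_self hs)).hasDerivWithinAt) hα.integrableOn_Icc
    fun s hs ↦ hineq s (Ioo_subset_Icc_self hs)
end

section
/- Let λ̄ > 0, k > 0, n ≥ 0 be real numbers and A, B ≥ 0. Then for every measurable function μ : (0, λ̄) → ℝ with μ(s) > 0 for all s ∈ (0, λ̄), one has (1/2) ∫_0^{λ̄} [ μ(s)·(k/s)·(s/λ̄)^k·A² + (1/μ(s))·(s/λ̄)^n·(1/λ̄)·B² ] ds ≥ (2·√k/(k + n + 1))·A·B (the left-hand side being possibly +∞). -/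
open MeasureTheory ENNReal

/-!
For each `s` the arithmetic–geometric mean inequality bounds half the integrand from below by
`√(f s * g s) * A * B`, where `f s = (k / s) * (s / lamBar) ^ k` and
`g s = (s / lamBar) ^ n * (1 / lamBar)`: the weight `μ s` multiplies one term and divides the
other, so it disappears from the geometric mean. What remains is the integral of a multiple of
`s ^ ((k + n - 1) / 2)`.
-/

lemma mul_sqrt_mul_le_half_weighted_add {m x y : ℝ} (hm : 0 < m) (hx : 0 ≤ x) (hy : 0 ≤ y)
    (a b : ℝ) :
    a * b * √(x * y) ≤ 1 / 2 * (m * x * a ^ 2 + 1 / m * y * b ^ 2) := by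
  have hmx : 0 ≤ m * x := by positivity
  have hmy : 0 ≤ 1 / m * y := by positivity
  have weight_cancels : √(x * y) = √(m * x) * √(1 / m * y) := by
    rw [← Real.sqrt_mul hmx]
    congr 1
    field_simp
  have amgm := two_mul_le_add_sq (√(m * x) * a) (√(1 / m * y) * b)
  rw [mul_pow, mul_pow, Real.sq_sqrt hmx, Real.sq_sqrt hmy] at amgm
  rw [weight_cancels]
  linarith

lemma ofReal_mul_lintegral_sqrt_mul_le {α : Type*} [MeasurableSpace α] {ν : Measure α}
    {μ f g : α → ℝ} (hμ : ∀ᵐ x ∂ν, 0 < μ x) (hf : ∀ᵐ x ∂ν, 0 ≤ f x) (hg : ∀ᵐ x ∂ν, 0 ≤ g x)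
    (a b : ℝ) :
    ENNReal.ofReal (a * b) * ∫⁻ x, ENNReal.ofReal √(f x * g x) ∂ν
      ≤ (1 / 2 : ℝ≥0∞) * ∫⁻ x, ENNReal.ofReal
          (μ x * f x * a ^ 2 + 1 / μ x * g x * b ^ 2) ∂ν := by
  have ofReal_half : ENNReal.ofReal (1 / 2) = 1 / 2 := by
    rw [ENNReal.ofReal_div_of_pos two_pos, ENNReal.ofReal_one, ENNReal.ofReal_ofNat]
  rw [← lintegral_const_mul' _ _ ENNReal.ofReal_ne_top, ← lintegral_const_mul' _ _ (by simp)]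
  refine lintegral_mono_ae ?_
  filter_upwards [hμ, hf, hg] with x hμx hfx hgx
  rw [← ENNReal.ofReal_mul' (Real.sqrt_nonneg _), ← ofReal_half,
    ← ENNReal.ofReal_mul one_half_pos.le]
  exact ENNReal.ofReal_le_ofReal (mul_sqrt_mul_le_half_weighted_add hμx hfx hgx a b)

lemma lintegral_Ioo_ofReal_rpow {b p : ℝ} (hb : 0 ≤ b) (hp : -1 < p) :
    ∫⁻ s in Set.Ioo 0 b, ENNReal.ofReal (s ^ p) = ENNReal.ofReal (b ^ (p + 1) / (p + 1)) := by
  have integrableOn_rpow : IntegrableOn (fun s : ℝ ↦ s ^ p) (Set.Ioo 0 b) :=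
    (intervalIntegrable_iff_integrableOn_Ioo_of_le hb).1
      (intervalIntegral.intervalIntegrable_rpow' hp)
  have rpow_nonneg_ae : 0 ≤ᵐ[volume.restrict (Set.Ioo 0 b)] fun s : ℝ ↦ s ^ p :=
    (ae_restrict_mem measurableSet_Ioo).mono fun s hs ↦ Real.rpow_nonneg hs.1.le p
  rw [← ofReal_integral_eq_lintegral_ofReal integrableOn_rpow rpow_nonneg_ae,
    ← integral_Ioc_eq_integral_Ioo, ← intervalIntegral.integral_of_le hb,
    integral_rpow (Or.inl hp), Real.zero_rpow (by linarith), sub_zero]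

lemma sqrt_rpow_weights {k l s : ℝ} (hk : 0 ≤ k) (hl : 0 < l) (hs : 0 < s) (n : ℝ) :
    √(k / s * (s / l) ^ k * ((s / l) ^ n * (1 / l)))
      = √k / l ^ ((k + n + 1) / 2) * s ^ ((k + n - 1) / 2) := by
  have product : k / s * (s / l) ^ k * ((s / l) ^ n * (1 / l))
      = k * (s ^ (k + n - 1) / l ^ (k + n + 1)) := by
    rw [Real.div_rpow hs.le hl.le, Real.div_rpow hs.le hl.le, Real.rpow_sub_one hs.ne',
      Real.rpow_add hs, Real.rpow_add_one hl.ne', Real.rpow_add hl]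
    field_simp
  have sqrt_rpow {x : ℝ} (hx : 0 < x) (q : ℝ) : √(x ^ q) = x ^ (q / 2) := by
    rw [Real.sqrt_eq_rpow, ← Real.rpow_mul hx.le, mul_one_div]
  rw [product, Real.sqrt_mul hk, Real.sqrt_div (by positivity), sqrt_rpow hs, sqrt_rpow hl]
  ring

lemma lintegral_sqrt_rpow_weights {k l n : ℝ} (hk : 0 ≤ k) (hl : 0 < l) (hkn : -1 < k + n) :
    ∫⁻ s in Set.Ioo 0 l, ENNReal.ofReal √(k / s * (s / l) ^ k * ((s / l) ^ n * (1 / l)))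
      = ENNReal.ofReal (2 * √k / (k + n + 1)) := by
  have exponent : (k + n - 1) / 2 + 1 = (k + n + 1) / 2 := by ring
  calc
    _ = ∫⁻ s in Set.Ioo 0 l, ENNReal.ofReal (√k / l ^ ((k + n + 1) / 2))
          * ENNReal.ofReal (s ^ ((k + n - 1) / 2)) :=
      setLIntegral_congr_fun measurableSet_Ioo fun s hs ↦ by
        rw [sqrt_rpow_weights hk hl hs.1, ENNReal.ofReal_mul (by positivity)]
    _ = ENNReal.ofReal (√k / l ^ ((k + n + 1) / 2))
          * ENNReal.ofReal (l ^ ((k + n + 1) / 2) / ((k + n + 1) / 2)) := by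
      rw [lintegral_const_mul' _ _ ENNReal.ofReal_ne_top,
        lintegral_Ioo_ofReal_rpow hl.le (by linarith), exponent]
    _ = _ := by
      rw [← ENNReal.ofReal_mul (by positivity)]
      congr 1
      field_simp

theorem weight_optimization_lower_bound_general {lamBar k n : ℝ} (hlamBar : 0 < lamBar)
    (hk : 0 ≤ k) (hkn : -1 < k + n) (A B : ℝ) {μ : ℝ → ℝ}
    (hμpos : ∀ s ∈ Set.Ioo (0 : ℝ) lamBar, 0 < μ s) :
    ENNReal.ofReal ((2 * Real.sqrt k / (k + n + 1)) * A * B)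
      ≤ (1 / 2 : ℝ≥0∞) * ∫⁻ s in Set.Ioo (0 : ℝ) lamBar,
          ENNReal.ofReal (μ s * (k / s) * (s / lamBar) ^ k * A ^ 2
            + (1 / μ s) * (s / lamBar) ^ n * (1 / lamBar) * B ^ 2) := by
  have hmem := ae_restrict_mem (μ := volume) (measurableSet_Ioo (a := (0 : ℝ)) (b := lamBar))
  have coeff_nonneg : 0 ≤ 2 * √k / (k + n + 1) :=
    div_nonneg (by positivity) (by linarith)
  have f_nonneg (s : ℝ) (hs : s ∈ Set.Ioo 0 lamBar) : 0 ≤ k / s * (s / lamBar) ^ k :=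
    mul_nonneg (div_nonneg hk hs.1.le) (Real.rpow_nonneg (div_nonneg hs.1.le hlamBar.le) k)
  have g_nonneg (s : ℝ) (hs : s ∈ Set.Ioo 0 lamBar) : 0 ≤ (s / lamBar) ^ n * (1 / lamBar) :=
    mul_nonneg (Real.rpow_nonneg (div_nonneg hs.1.le hlamBar.le) n) (one_div_nonneg.2 hlamBar.le)
  have weight_free_bound := ofReal_mul_lintegral_sqrt_mul_le
    (hmem.mono hμpos) (hmem.mono f_nonneg) (hmem.mono g_nonneg) A B
  rw [lintegral_sqrt_rpow_weights hk hlamBar hkn, ← ENNReal.ofReal_mul' coeff_nonneg,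
    mul_comm (A * B), ← mul_assoc] at weight_free_bound
  simpa only [mul_assoc] using weight_free_bound

/-- Optimization step in the proof of Proposition 5: for every positive measurable
weight `μ` on `(0, λ̄)`,
`(1/2) ∫_0^λ̄ [ μ(s)(k/s)(s/λ̄)^k A² + (1/μ(s))(s/λ̄)^n (1/λ̄) B² ] ds
  ≥ (2√k/(k+n+1)) A B`, the left-hand side being possibly `+∞`. -/
theorem weight_optimization_lower_bound
    (lamBar k n : ℝ) (hlamBar : 0 < lamBar) (hk : 0 < k) (hn : 0 ≤ n)
    (A B : ℝ) (hA : 0 ≤ A) (hB : 0 ≤ B)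
    (μ : ℝ → ℝ) (hμmeas : Measurable μ)
    (hμpos : ∀ s ∈ Set.Ioo (0 : ℝ) lamBar, 0 < μ s) :
    ENNReal.ofReal ((2 * Real.sqrt k / (k + n + 1)) * A * B)
      ≤ (1 / 2 : ℝ≥0∞) * ∫⁻ s in Set.Ioo (0 : ℝ) lamBar,
          ENNReal.ofReal (μ s * (k / s) * (s / lamBar) ^ k * A ^ 2
            + (1 / μ s) * (s / lamBar) ^ n * (1 / lamBar) * B ^ 2) :=
  weight_optimization_lower_bound_general hlamBar hk.le (by linarith) A B hμpos
end

section
/- Let λ̄ > 0, k > 0, n ≥ 0 be real numbers and A, B > 0, and define μ(s) = (B/(A·√k))·(λ̄/s)^{(k−n−1)/2} for s ∈ (0, λ̄). Then (1/2) ∫_0^{λ̄} [ μ(s)·(k/s)·(s/λ̄)^k·A² + (1/μ(s))·(s/λ̄)^n·(1/λ̄)·B² ] ds = (2·√k/(k + n + 1))·A·B. Moreover, if k ≥ n + 1 then μ is a positive, monotonically nonincreasing function on (0, λ̄]. -/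
open intervalIntegral

/-- The optimal weight function of the bound, where `L` is the paper's `λ̄`. For `A, B > 0` it is
the minimiser over `m > 0` of `m a + b / m` for the two coefficients `a = (k / s) (s / L) ^ k A²`
and `b = (s / L) ^ n B² / L` of the bound. -/
noncomputable def optimalWeight (L k n A B s : ℝ) : ℝ :=
  B / (A * √k) * (L / s) ^ ((k - n - 1) / 2)

lemma antitoneOn_div_rpow {L p : ℝ} (hL : 0 ≤ L) (hp : 0 ≤ p) :
    AntitoneOn (fun s : ℝ ↦ (L / s) ^ p) (Set.Ioi 0) := fun _ hs _ ht hst ↦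
  Real.rpow_le_rpow (div_nonneg hL (le_of_lt ht)) (div_le_div_of_nonneg_left hL hs hst) hp

lemma integral_div_rpow {L p : ℝ} (hL : L ≠ 0) (hp : -1 < p) :
    ∫ s in (0 : ℝ)..L, (s / L) ^ p = L / (p + 1) := by
  have hp' : p + 1 ≠ 0 := by linarith
  calc ∫ s in (0 : ℝ)..L, (s / L) ^ p = L * ∫ t in (0 : ℝ)..1, t ^ p := by
        rw [integral_comp_div (fun t ↦ t ^ p) hL, zero_div, div_self hL, smul_eq_mul]
    _ = L / (p + 1) := by
        rw [integral_rpow (Or.inl hp), Real.one_rpow, Real.zero_rpow hp', sub_zero, mul_one_div]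

section OptimalWeight

variable {L k n A B s : ℝ}

lemma optimalWeight_pos (hL : 0 < L) (hk : 0 < k) (hBA : 0 < B / A) (hs : 0 < s) :
    0 < optimalWeight L k n A B s := by
  rw [optimalWeight, ← div_div]
  positivity

lemma antitoneOn_optimalWeight (hL : 0 ≤ L) (hBA : 0 ≤ B / A) (hnk : n + 1 ≤ k) :
    AntitoneOn (optimalWeight L k n A B) (Set.Ioi 0) := by
  have hc : 0 ≤ B / (A * √k) := by
    rw [← div_div]
    positivity
  have hp : 0 ≤ (k - n - 1) / 2 := by linarith
  exact fun s hs t ht hst ↦ mul_le_mul_of_nonneg_left (antitoneOn_div_rpow hL hp hs ht hst) hc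

lemma optimalWeight_mul_eq (hL : 0 < L) (hs : 0 < s) :
    optimalWeight L k n A B s * (k / s) * (s / L) ^ k * A ^ 2 =
      √k * A * B / L * (s / L) ^ ((k + n - 1) / 2) := by
  have ht : 0 < s / L := div_pos hs hL
  have hpow : (L / s) ^ ((k - n - 1) / 2) * (s / L) ^ k =
      (s / L) ^ ((k + n - 1) / 2) * (s / L) := by
    rw [← inv_div s L, ← Real.rpow_neg_eq_inv_rpow, ← Real.rpow_add ht, ← Real.rpow_add_one ht.ne']
    ring_nf
  have hconst : B / (A * √k) * k * A ^ 2 = √k * A * B := by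
    field_simp
    rw [mul_div_assoc, Real.div_sqrt]
  calc optimalWeight L k n A B s * (k / s) * (s / L) ^ k * A ^ 2
      = B / (A * √k) * k * A ^ 2 / s * ((L / s) ^ ((k - n - 1) / 2) * (s / L) ^ k) := by
        rw [optimalWeight]
        ring
    _ = √k * A * B / L * (s / L) ^ ((k + n - 1) / 2) := by
        rw [hconst, hpow]
        field_simp

lemma one_div_optimalWeight_mul_eq (hL : 0 < L) (hs : 0 < s) :
    1 / optimalWeight L k n A B s * (s / L) ^ n * (1 / L) * B ^ 2 =
      √k * A * B / L * (s / L) ^ ((k + n - 1) / 2) := by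
  have ht : 0 < s / L := div_pos hs hL
  have hpow : (s / L) ^ ((k - n - 1) / 2) * (s / L) ^ n = (s / L) ^ ((k + n - 1) / 2) := by
    rw [← Real.rpow_add ht]
    ring_nf
  have hinv : 1 / optimalWeight L k n A B s = A * √k / B * (s / L) ^ ((k - n - 1) / 2) := by
    rw [optimalWeight, one_div, mul_inv, inv_div, ← Real.inv_rpow (div_pos hL hs).le, inv_div]
  rw [hinv, ← hpow]
  field_simp

-- At the minimiser of `m a + b / m` the two terms coincide: this is equality in AM-GM.
lemma integral_optimalWeight (hL : 0 < L) (hn : -(k + 1) < n) :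
    (1 / 2 : ℝ) * ∫ s in (0 : ℝ)..L, (optimalWeight L k n A B s * (k / s) * (s / L) ^ k * A ^ 2
        + 1 / optimalWeight L k n A B s * (s / L) ^ n * (1 / L) * B ^ 2) =
      2 * √k / (k + n + 1) * A * B := by
  have hexp : -1 < (k + n - 1) / 2 := by linarith
  calc _ = (1 / 2 : ℝ) * ∫ s in (0 : ℝ)..L,
          2 * (√k * A * B / L) * (s / L) ^ ((k + n - 1) / 2) := by
        congr 1
        refine integral_congr_Ioo_of_le hL.le fun s hs ↦ ?_
        rw [optimalWeight_mul_eq hL hs.1, one_div_optimalWeight_mul_eq hL hs.1]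
        ring
    _ = √k * A * B / ((k + n - 1) / 2 + 1) := by
        rw [integral_const_mul, integral_div_rpow hL.ne' hexp]
        field_simp
    _ = 2 * √k / (k + n + 1) * A * B := by
        rw [show (k + n - 1) / 2 + 1 = (k + n + 1) / 2 by ring]
        field_simp

end OptimalWeight

theorem optimal_weight_function_general {L k n A B : ℝ} (hL : 0 < L) (hk : 0 < k)
    (hn : -(k + 1) < n) (hBA : 0 < B / A) {μ : ℝ → ℝ}
    (hμ : Set.EqOn μ (optimalWeight L k n A B) (Set.Ioc 0 L)) :
    ((1 / 2 : ℝ) * ∫ s in (0 : ℝ)..L, (μ s * (k / s) * (s / L) ^ k * A ^ 2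
        + 1 / μ s * (s / L) ^ n * (1 / L) * B ^ 2) =
      2 * √k / (k + n + 1) * A * B)
    ∧ (∀ s ∈ Set.Ioc 0 L, 0 < μ s)
    ∧ (n + 1 ≤ k → AntitoneOn μ (Set.Ioc 0 L)) := by
  refine ⟨?_, fun s hs ↦ ?_, fun hnk ↦ ?_⟩
  · rw [← integral_optimalWeight hL hn]
    congr 1
    exact integral_congr_Ioo_of_le hL.le fun s hs ↦ by simp only [hμ (Set.Ioo_subset_Ioc_self hs)]
  · rw [hμ hs]
    exact optimalWeight_pos hL hk hBA hs.1
  · exact ((antitoneOn_optimalWeight hL.le hBA.le hnk).mono Set.Ioc_subset_Ioi_self).congr hμ.symm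

/-- The optimal weight function in the proof of Proposition 5:
with `μ(s) = (B/(A√k))(λ̄/s)^((k−n−1)/2)` on `(0, λ̄)`, the bound is attained:
`(1/2) ∫_0^λ̄ [ μ(s)(k/s)(s/λ̄)^k A² + (1/μ(s))(s/λ̄)^n (1/λ̄) B² ] ds
  = (2√k/(k+n+1)) A B`; moreover if `k ≥ n + 1` then `μ` is positive and
nonincreasing on `(0, λ̄]`. -/
theorem optimal_weight_function
    (lamBar k n : ℝ) (hlamBar : 0 < lamBar) (hk : 0 < k) (hn : 0 ≤ n)
    (A B : ℝ) (hA : 0 < A) (hB : 0 < B)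
    (μ : ℝ → ℝ)
    (hμ : ∀ s ∈ Set.Ioc (0 : ℝ) lamBar,
      μ s = (B / (A * Real.sqrt k)) * (lamBar / s) ^ ((k - n - 1) / 2)) :
    ((1 / 2 : ℝ) * ∫ s in (0 : ℝ)..lamBar,
        (μ s * (k / s) * (s / lamBar) ^ k * A ^ 2
          + (1 / μ s) * (s / lamBar) ^ n * (1 / lamBar) * B ^ 2)
      = (2 * Real.sqrt k / (k + n + 1)) * A * B)
    ∧ (k ≥ n + 1 →
        (∀ s ∈ Set.Ioc (0 : ℝ) lamBar, 0 < μ s)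
        ∧ AntitoneOn μ (Set.Ioc (0 : ℝ) lamBar)) := by
  have ⟨hint, hpos, hanti⟩ :=
    optimal_weight_function_general hlamBar hk (by linarith) (div_pos hB hA) hμ
  exact ⟨hint, fun hkn ↦ ⟨hpos, hanti hkn⟩⟩
end
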